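/- Let φ : ℂ → ℝ be C⁴-smooth with Δφ > 0 everywhere and satisfying (1/Δφ)·Δ log Δφ ≥ -2 on ℂ. If F : ℂ → ℂ is a nontrivial entire function, then the function log(|F|² e^{2φ} Δφ) is subharmonic on ℂ in the sense of distributions, and hence |F|² e^{2φ} Δφ is subharmonic on ℂ. -/

import Mathlib

open MeasureTheory Complex Real Filter Topology

/-- Wirtinger derivative ∂̄ = (∂ₓ + i ∂_y)/2. -/
noncomputable def dbar (f : ℂ → ℂ) (z : ℂ) : ℂ :=
  (fderiv ℝ f z 1 + Complex.I * fderiv ℝ f z Complex.I) / 2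

/-- Wirtinger derivative ∂ = (∂ₓ - i ∂_y)/2. -/
noncomputable def dee (f : ℂ → ℂ) (z : ℂ) : ℂ :=
  (fderiv ℝ f z 1 - Complex.I * fderiv ℝ f z Complex.I) / 2

/-- ∂̄ applied to a real-valued function (viewed as complex-valued). -/
noncomputable def dbarR (φ : ℂ → ℝ) (z : ℂ) : ℂ := dbar (fun w => (φ w : ℂ)) z

/-- ∂ applied to a real-valued function (viewed as complex-valued). -/
noncomputable def deeR (φ : ℂ → ℝ) (z : ℂ) : ℂ := dee (fun w => (φ w : ℂ)) z

/-- Normalized Laplacian Δ̂ = (∂ₓ² + ∂_y²)/4. -/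
noncomputable def lapHat (φ : ℂ → ℝ) (z : ℂ) : ℝ :=
  (fderiv ℝ (fun w => fderiv ℝ φ w 1) z 1 +
   fderiv ℝ (fun w => fderiv ℝ φ w Complex.I) z Complex.I) / 4

/-- `u` solves `∂̄ u = f` in the sense of distributions. -/
def IsDbarSol (u f : ℂ → ℂ) : Prop :=
  ∀ ψ : ℂ → ℂ, ContDiff ℝ (⊤ : ℕ∞) ψ → HasCompactSupport ψ →
    ∫ z : ℂ, f z * ψ z = -∫ z : ℂ, u z * dbar ψ z

/-- Subharmonicity in the sense of distributions. -/
def SubharmonicDistrib (w : ℂ → ℝ) : Prop :=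
  LocallyIntegrable w volume ∧
    ∀ ψ : ℂ → ℝ, ContDiff ℝ (⊤ : ℕ∞) ψ → HasCompactSupport ψ → (∀ z, 0 ≤ ψ z) →
      0 ≤ ∫ z : ℂ, w z * lapHat ψ z

/-- Subharmonicity via the sub-mean value property. -/
def SubharmonicSMV (w : ℂ → ℝ) : Prop :=
  UpperSemicontinuous w ∧
    ∀ (z₀ : ℂ) (r : ℝ), 0 < r →
      w z₀ ≤ (1 / (Real.pi * r ^ 2)) * ∫ z in Metric.ball z₀ r, w z

/-!
By the curvature hypothesis, `h = 2 φ + log (Δ φ)` is a `C²` function with nonnegative Laplacian.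
Composing the function `log (‖w‖ ^ 2 + ε)`, whose Laplacian on the plane is nonnegative, with the
holomorphic map `F` multiplies its Laplacian by `‖F'‖ ^ 2`. Hence `log (‖F‖ ^ 2 + ε)` is
subharmonic, and letting `ε → 0` under the integral against a test function handles `log (‖F‖ ^ 2)`,
whose singularities at the zeros of `F` are only logarithmic. The product `‖F‖ ^ 2 * exp h` has no
singularity at all: it is `C²`, and its Laplacian is nonnegative as the limit of those of
`exp (log (‖F‖ ^ 2 + ε) + h)`. For a `C²` function, nonnegativity of the Laplacian gives the
sub-mean value property because the mean over a ball is nondecreasing in the radius.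
-/

section

open scoped Laplacian Gradient
open InnerProductSpace

section SecondDerivative

variable {𝕜 E F G : Type*} [NontriviallyNormedField 𝕜]
  [NormedAddCommGroup E] [NormedSpace 𝕜 E] [NormedAddCommGroup F] [NormedSpace 𝕜 F]
  [NormedAddCommGroup G] [NormedSpace 𝕜 G]

lemma fderiv_fderiv_comp_apply {g : F → G} {f : E → F} {x : E}
    (hg : ContDiffAt 𝕜 2 g (f x)) (hf : ContDiffAt 𝕜 2 f x) (v w : E) :
    fderiv 𝕜 (fderiv 𝕜 (g ∘ f)) x v w =
      fderiv 𝕜 (fderiv 𝕜 g) (f x) (fderiv 𝕜 f x v) (fderiv 𝕜 f x w) +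
        fderiv 𝕜 g (f x) (fderiv 𝕜 (fderiv 𝕜 f) x v w) := by
  have chain : fderiv 𝕜 (g ∘ f) =ᶠ[𝓝 x] fun y => (fderiv 𝕜 g (f y)).comp (fderiv 𝕜 f y) := by
    filter_upwards [hf.eventually (by simp),
      hf.continuousAt.eventually (hg.eventually (by simp))] with y hfy hgy
    exact fderiv_comp y (hgy.differentiableAt two_ne_zero) (hfy.differentiableAt two_ne_zero)
  have hdg : DifferentiableAt 𝕜 (fderiv 𝕜 g) (f x) :=
    (hg.fderiv_right (m := 1) (by norm_num)).differentiableAt one_ne_zero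
  have hdf : DifferentiableAt 𝕜 (fderiv 𝕜 f) x :=
    (hf.fderiv_right (m := 1) (by norm_num)).differentiableAt one_ne_zero
  have hdgf : HasFDerivAt (fun y => fderiv 𝕜 g (f y))
      ((fderiv 𝕜 (fderiv 𝕜 g) (f x)).comp (fderiv 𝕜 f x)) x :=
    hdg.hasFDerivAt.comp x (hf.differentiableAt two_ne_zero).hasFDerivAt
  rw [chain.fderiv_eq, (hdgf.clm_comp hdf.hasFDerivAt).fderiv]
  simp [add_comm]

lemma fderiv_fderiv_apply_const {f : E → F} {x : E} (hf : DifferentiableAt 𝕜 (fderiv 𝕜 f) x)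
    (v w : E) : fderiv 𝕜 (fun y => fderiv 𝕜 f y v) x w = fderiv 𝕜 (fderiv 𝕜 f) x w v := by
  rw [fderiv_clm_apply hf (differentiableAt_const v)]
  simp

end SecondDerivative

lemma contDiff_log_norm_sq_add_const {E : Type*} [NormedAddCommGroup E] [InnerProductSpace ℝ E]
    {c : ℝ} (hc : 0 < c) {n : ℕ∞} : ContDiff ℝ n fun x : E => Real.log (‖x‖ ^ 2 + c) :=
  ((contDiff_norm_sq ℝ).add contDiff_const).log fun x => by positivity

section RealLaplacian

variable {E F : Type*} [NormedAddCommGroup E] [InnerProductSpace ℝ E] [FiniteDimensional ℝ E]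
  [NormedAddCommGroup F] [NormedSpace ℝ F]

lemma laplacian_eq_sum_fderiv_fderiv {ι : Type*} [Fintype ι] (b : OrthonormalBasis ι ℝ E)
    (f : E → F) (x : E) : Δ f x = ∑ i, fderiv ℝ (fderiv ℝ f) x (b i) (b i) := by
  simp [laplacian_eq_iteratedFDeriv_orthonormalBasis f b, iteratedFDeriv_two_apply]

lemma laplacian_real_comp {g : ℝ → ℝ} {f : E → ℝ} {x : E} (hg : ContDiffAt ℝ 2 g (f x))
    (hf : ContDiffAt ℝ 2 f x) :
    Δ (g ∘ f) x = deriv g (f x) * Δ f x + iteratedDeriv 2 g (f x) * ‖∇ f x‖ ^ 2 := by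
  let b := stdOrthonormalBasis ℝ E
  have norm_gradient_sq : ∑ i, fderiv ℝ f x (b i) ^ 2 = ‖∇ f x‖ ^ 2 := by
    simp only [← inner_gradient_left]
    simpa using b.sum_sq_norm_inner_left (∇ f x)
  have second_deriv : ∀ s : ℝ,
      fderiv ℝ (fderiv ℝ g) (f x) s s = s ^ 2 * iteratedDeriv 2 g (f x) := fun s => by
    simpa [iteratedFDeriv_two_apply, sq] using
      iteratedFDeriv_apply_eq_iteratedDeriv_mul_prod (n := 2) (f := g) (x := f x) (m := ![s, s])
  have first_deriv : ∀ s : ℝ, fderiv ℝ g (f x) s = s * deriv g (f x) := by simp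
  simp only [laplacian_eq_sum_fderiv_fderiv b, fderiv_fderiv_comp_apply hg hf, second_deriv,
    first_deriv, Finset.sum_add_distrib, ← Finset.sum_mul, norm_gradient_sq]
  ring

lemma laplacian_comp_add_smul {f : E → F} (hf : ContDiff ℝ 2 f) (x y : E) (t : ℝ) :
    Δ (fun y => f (x + t • y)) y = t ^ 2 • Δ f (x + t • y) := by
  have affine : fderiv ℝ (fun y : E => x + t • y) = fun _ => t • ContinuousLinearMap.id ℝ E := by
    funext y
    simpa using (((hasFDerivAt_id y).const_smul t).const_add x).fderiv
  have chain : ∀ v, fderiv ℝ (fderiv ℝ fun y => f (x + t • y)) y v v =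
      t ^ 2 • fderiv ℝ (fderiv ℝ f) (x + t • y) v v := fun v => by
    have := fderiv_fderiv_comp_apply (x := y) (f := fun y => x + t • y) hf.contDiffAt
      (by fun_prop) v v
    simpa only [Function.comp_def, affine, fderiv_fun_const, Pi.zero_apply,
      zero_apply, map_zero, add_zero, smul_apply,
      ContinuousLinearMap.id_apply, map_smul, smul_smul, sq] using this
  simp only [laplacian_eq_sum_fderiv_fderiv (stdOrthonormalBasis ℝ E), chain, Finset.smul_sum]

lemma laplacian_norm_sq (x : E) : Δ (fun y : E => ‖y‖ ^ 2) x = 2 * Module.finrank ℝ E := by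
  have second_deriv (v : E) : fderiv ℝ (fderiv ℝ fun y : E => ‖y‖ ^ 2) x v v = 2 * ‖v‖ ^ 2 := by
    have h : fderiv ℝ (fderiv ℝ fun y : E => ‖y‖ ^ 2) x = 2 • innerSL ℝ := by
      rw [fderiv_norm_sq]
      exact (2 • innerSL ℝ (E := E)).fderiv
    rw [h, ← real_inner_self_eq_norm_sq]
    exact (two_nsmul _).trans (two_mul _).symm
  simp [laplacian_eq_sum_fderiv_fderiv (stdOrthonormalBasis ℝ E), second_deriv, mul_comm]

lemma gradient_norm_sq (x : E) : ∇ (fun y : E => ‖y‖ ^ 2) x = (2 : ℝ) • x := by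
  refine HasGradientAt.gradient (hasGradientAt_iff_hasFDerivAt.mpr ?_)
  refine (hasStrictFDerivAt_norm_sq x).hasFDerivAt.congr_fderiv ?_
  ext v
  simp

lemma laplacian_log_norm_sq_add_const {c : ℝ} (hc : 0 < c) (x : E) :
    Δ (fun y : E => Real.log (‖y‖ ^ 2 + c)) x =
      2 * ((Module.finrank ℝ E - 2) * ‖x‖ ^ 2 + Module.finrank ℝ E * c) / (‖x‖ ^ 2 + c) ^ 2 := by
  have hne : ‖x‖ ^ 2 + c ≠ 0 := by positivity
  have first_deriv : deriv (fun s => Real.log (s + c)) (‖x‖ ^ 2) = (‖x‖ ^ 2 + c)⁻¹ := by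
    rw [deriv_comp_add_const, Real.deriv_log]
  have second_deriv :
      iteratedDeriv 2 (fun s => Real.log (s + c)) (‖x‖ ^ 2) = -((‖x‖ ^ 2 + c) ^ 2)⁻¹ := by
    rw [iteratedDeriv_comp_add_const]
    simp [iteratedDeriv_succ]
  have smooth : ContDiffAt ℝ 2 (fun s => Real.log (s + c)) (‖x‖ ^ 2) :=
    (contDiffAt_id.add contDiffAt_const).log hne
  change Δ ((fun s => Real.log (s + c)) ∘ fun y : E => ‖y‖ ^ 2) x = _
  rw [laplacian_real_comp (f := fun y : E => ‖y‖ ^ 2) smooth (contDiff_norm_sq ℝ).contDiffAt,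
    laplacian_norm_sq, gradient_norm_sq, first_deriv, second_deriv, norm_smul, Real.norm_ofNat]
  field_simp
  ring

lemma laplacian_exp_comp_nonneg {f : E → ℝ} {x : E} (hf : ContDiffAt ℝ 2 f x)
    (h : 0 ≤ Δ f x) : 0 ≤ Δ (Real.exp ∘ f) x := by
  rw [laplacian_real_comp Real.contDiff_exp.contDiffAt hf, Real.deriv_exp,
    iteratedDeriv_eq_iterate, Real.iter_deriv_exp]
  positivity

end RealLaplacian

section ComplexPlane
variable {F : Type*} [NormedAddCommGroup F] [NormedSpace ℝ F]

lemma laplacian_comp_analytic {g : ℂ → F} {f : ℂ → ℂ} {z : ℂ} (hg : ContDiffAt ℝ 2 g (f z))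
    (hf : AnalyticAt ℂ f z) : Δ (g ∘ f) z = ‖deriv f z‖ ^ 2 • Δ g (f z) := by
  have hf2 : ContDiffAt ℝ 2 f z := hf.contDiffAt.restrict_scalars ℝ
  have harmonic : fderiv ℝ (fderiv ℝ f) z 1 1 + fderiv ℝ (fderiv ℝ f) z I I = 0 := by
    simpa [laplacian_eq_sum_fderiv_fderiv Complex.orthonormalBasisOneI] using
      hf.harmonicAt.2.eq_of_nhds
  have conformal : ∀ v, fderiv ℝ f z v = deriv f z * v := fun v => by
    simp [hf.differentiableAt.fderiv_restrictScalars ℝ, mul_comm]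
  set a := deriv f z
  have cartesian : a = a.re • (1 : ℂ) + a.im • I := by simp
  have rotated : a * I = a.re • I - a.im • (1 : ℂ) := by
    apply Complex.ext <;> simp
  have norm_sq : ‖a‖ ^ 2 = a.re ^ 2 + a.im ^ 2 := by
    rw [← Complex.normSq_eq_norm_sq, Complex.normSq_apply, sq, sq]
  have bilinear (B : ℂ →L[ℝ] ℂ →L[ℝ] F) :
      B a a + B (a * I) (a * I) = ‖a‖ ^ 2 • (B 1 1 + B I I) := by
    rw [rotated, norm_sq]
    nth_rw 1 2 [cartesian]
    simp only [map_add, map_sub, map_smul, add_apply,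
      sub_apply, smul_apply]
    module
  simp only [laplacian_eq_sum_fderiv_fderiv Complex.orthonormalBasisOneI, Fin.sum_univ_two,
    Complex.coe_orthonormalBasisOneI, Matrix.cons_val_zero, Matrix.cons_val_one,
    fderiv_fderiv_comp_apply hg hf2, conformal, mul_one]
  rw [← bilinear, add_add_add_comm, ← map_add, harmonic, map_zero, add_zero]

lemma laplacian_log_norm_sq_analytic_add_const_nonneg {f : ℂ → ℂ} {z : ℂ} (hf : AnalyticAt ℂ f z)
    {c : ℝ} (hc : 0 < c) : 0 ≤ Δ (fun w => Real.log (‖f w‖ ^ 2 + c)) z := by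
  have := laplacian_comp_analytic (contDiff_log_norm_sq_add_const hc (n := 2)).contDiffAt hf
  rw [Function.comp_def] at this
  rw [this, laplacian_log_norm_sq_add_const hc, Complex.finrank_real_complex]
  simp only [Nat.cast_ofNat, sub_self, zero_mul, zero_add]
  positivity

/-- The exponentials of `log (‖f‖ ^ 2 + c) + u`, which are subharmonic for `c > 0`, depend affinely
on `c`, so the inequality for their Laplacians survives at `c = 0`. -/
lemma laplacian_norm_sq_analytic_mul_exp_nonneg {f : ℂ → ℂ} {u : ℂ → ℝ} {z : ℂ}
    (hf : AnalyticAt ℂ f z) (hu : ContDiffAt ℝ 2 u z) (h : 0 ≤ Δ u z) :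
    0 ≤ Δ (fun w => ‖f w‖ ^ 2 * Real.exp (u w)) z := by
  have hf2 : ContDiffAt ℝ 2 f z := hf.contDiffAt.restrict_scalars ℝ
  have hexp : ContDiffAt ℝ 2 (fun w => Real.exp (u w)) z := hu.exp
  have hprod : ContDiffAt ℝ 2 (fun w => ‖f w‖ ^ 2 * Real.exp (u w)) z := (hf2.norm_sq ℝ).mul hexp
  have regularized {c : ℝ} (hc : 0 < c) :
      0 ≤ Δ (fun w => ‖f w‖ ^ 2 * Real.exp (u w)) z + c * Δ (fun w => Real.exp (u w)) z := by
    have hlog : ContDiffAt ℝ 2 (fun w => Real.log (‖f w‖ ^ 2 + c)) z :=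
      ((contDiff_log_norm_sq_add_const hc (n := 2)).contDiffAt).comp z hf2
    have factor : (Real.exp ∘ ((fun w => Real.log (‖f w‖ ^ 2 + c)) + u)) =
        (fun w => ‖f w‖ ^ 2 * Real.exp (u w)) + c • fun w => Real.exp (u w) := by
      funext w
      have : 0 < ‖f w‖ ^ 2 + c := by positivity
      simp [Real.exp_add, Real.exp_log this, add_mul]
    rw [← smul_eq_mul, ← laplacian_smul c hexp,
      ← hprod.laplacian_add (f₂ := c • fun w => Real.exp (u w)) (hexp.const_smul c),
      ← factor]
    refine laplacian_exp_comp_nonneg (hlog.add hu) ?_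
    rw [hlog.laplacian_add hu]
    exact add_nonneg (laplacian_log_norm_sq_analytic_add_const_nonneg hf hc) h
  have limit : Tendsto (fun c => Δ (fun w => ‖f w‖ ^ 2 * Real.exp (u w)) z +
      c * Δ (fun w => Real.exp (u w)) z) (𝓝[>] 0)
      (𝓝 (Δ (fun w => ‖f w‖ ^ 2 * Real.exp (u w)) z)) := by
    refine tendsto_nhdsWithin_of_tendsto_nhds (Continuous.tendsto' (by fun_prop) _ _ (by simp))
  exact ge_of_tendsto limit (eventually_mem_nhdsWithin.mono fun c hc => regularized hc)

end ComplexPlane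

section Green

lemma integrable_mul_of_hasCompactSupport {X : Type*} [TopologicalSpace X] [MeasurableSpace X]
    [OpensMeasurableSpace X] {μ : Measure X} [IsFiniteMeasureOnCompacts μ] {f g : X → ℝ}
    (hf : Continuous f) (hg : Continuous g) (hc : HasCompactSupport f ∨ HasCompactSupport g) :
    Integrable (fun x => f x * g x) μ :=
  (hf.mul hg).integrable_of_hasCompactSupport (hc.elim (·.mul_right) (·.mul_left))

variable {E : Type*} [NormedAddCommGroup E] [InnerProductSpace ℝ E] [FiniteDimensional ℝ E]
  [MeasurableSpace E] [BorelSpace E] {μ : Measure E} [μ.IsAddHaarMeasure]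

lemma integral_inner_gradient_eq_neg_integral_laplacian_mul {f g : E → ℝ} (hf : ContDiff ℝ 2 f)
    (hg : ContDiff ℝ 1 g) (hc : HasCompactSupport f ∨ HasCompactSupport g) :
    ∫ x, inner ℝ (∇ f x) (∇ g x) ∂μ = -∫ x, Δ f x * g x ∂μ := by
  let b := stdOrthonormalBasis ℝ E
  have hf' : ContDiff ℝ 1 (fderiv ℝ f) := hf.fderiv_right (by norm_num)
  have cont_f (v) : Continuous fun x => fderiv ℝ f x v := hf'.continuous.clm_apply continuous_const
  have cont_f' (v) : Continuous fun x => fderiv ℝ (fderiv ℝ f) x v v := by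
    have := hf'.continuous_fderiv one_ne_zero
    fun_prop
  have cont_g (v) : Continuous fun x => fderiv ℝ g x v :=
    (hg.continuous_fderiv one_ne_zero).clm_apply continuous_const
  have hessian_apply (v x : E) : fderiv ℝ (fun y => fderiv ℝ f y v) x v =
      fderiv ℝ (fderiv ℝ f) x v v :=
    fderiv_fderiv_apply_const (hf'.differentiable one_ne_zero x) v v
  have int_gradient (v) : Integrable (fun x => fderiv ℝ f x v * fderiv ℝ g x v) μ :=
    integrable_mul_of_hasCompactSupport (cont_f v) (cont_g v)
      (hc.imp (·.fderiv_apply ℝ v) (·.fderiv_apply ℝ v))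
  have int_hessian (v) : Integrable (fun x => fderiv ℝ (fderiv ℝ f) x v v * g x) μ :=
    integrable_mul_of_hasCompactSupport (cont_f' v) hg.continuous
      (hc.imp_left fun h => by
        simpa only [hessian_apply] using (h.fderiv_apply ℝ v).fderiv_apply ℝ v)
  have by_parts (v) : ∫ x, fderiv ℝ f x v * fderiv ℝ g x v ∂μ =
      -∫ x, fderiv ℝ (fderiv ℝ f) x v v * g x ∂μ := by
    simp only [← hessian_apply] at int_hessian ⊢
    exact integral_mul_fderiv_eq_neg_fderiv_mul_of_integrable (int_hessian v) (int_gradient v)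
      (integrable_mul_of_hasCompactSupport (cont_f v) hg.continuous
        (hc.imp_left (·.fderiv_apply ℝ v)))
      (fun x _ => ((hf'.differentiable one_ne_zero x).clm_apply (differentiableAt_const v)))
      fun x _ => hg.differentiable one_ne_zero x
  have inner_eq (x : E) : inner ℝ (∇ f x) (∇ g x) =
      ∑ i, fderiv ℝ f x (b i) * fderiv ℝ g x (b i) := by
    rw [← b.sum_inner_mul_inner]
    refine Finset.sum_congr rfl fun i _ => ?_
    rw [real_inner_comm (∇ g x), inner_gradient_left, inner_gradient_left]
  simp only [inner_eq, laplacian_eq_sum_fderiv_fderiv b, Finset.sum_mul]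
  rw [integral_finsetSum _ fun i _ => int_gradient (b i),
    integral_finsetSum _ fun i _ => int_hessian (b i), ← Finset.sum_neg_distrib]
  exact Finset.sum_congr rfl fun i _ => by_parts (b i)

lemma integral_mul_laplacian_eq_integral_laplacian_mul {f g : E → ℝ} (hf : ContDiff ℝ 2 f)
    (hg : ContDiff ℝ 2 g) (hc : HasCompactSupport f ∨ HasCompactSupport g) :
    ∫ x, f x * Δ g x ∂μ = ∫ x, Δ f x * g x ∂μ := by
  have hfg := integral_inner_gradient_eq_neg_integral_laplacian_mul (μ := μ) hf
    (hg.of_le one_le_two) hc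
  have hgf := integral_inner_gradient_eq_neg_integral_laplacian_mul (μ := μ) hg
    (hf.of_le one_le_two) hc.symm
  simp only [real_inner_comm, mul_comm (Δ g _)] at hgf
  linarith

end Green

section MeanValue

lemma hasDerivAt_setIntegral_of_isCompact {X : Type*} [TopologicalSpace X] [T2Space X]
    [MeasurableSpace X] [OpensMeasurableSpace X] {μ : Measure X} [IsFiniteMeasureOnCompacts μ]
    {f f' : ℝ → X → ℝ} {s K : Set X} (hK : IsCompact K) (hs : MeasurableSet s) (hsK : s ⊆ K)
    (hf : ∀ t, Continuous (f t)) (hf' : Continuous (Function.uncurry f'))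
    (hderiv : ∀ t x, HasDerivAt (f · x) (f' t x) t) (t : ℝ) :
    HasDerivAt (fun t => ∫ x in s, f t x ∂μ) (∫ x in s, f' t x ∂μ) t := by
  have hμs : μ s < ⊤ := (measure_mono hsK).trans_lt hK.measure_lt_top
  obtain ⟨C, hC⟩ := (isCompact_closedBall t 1 |>.prod hK).exists_bound_of_continuousOn
    hf'.continuousOn
  have bound : ∀ᵐ x ∂μ.restrict s, ∀ τ ∈ Metric.closedBall t 1, ‖f' τ x‖ ≤ C :=
    (ae_restrict_mem hs).mono fun x hx τ hτ => hC (τ, x) ⟨hτ, hsK hx⟩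
  refine (hasDerivAt_integral_of_dominated_loc_of_deriv_le (bound := fun _ => C)
    (Metric.closedBall_mem_nhds t one_pos)
    (Eventually.of_forall fun τ => (hf τ).aestronglyMeasurable)
    ?_ (by fun_prop) bound (integrableOn_const hμs.ne)
    (ae_of_all _ fun x τ _ => hderiv τ x)).2
  exact ((hf t).continuousOn.integrableOn_compact hK).mono_set hsK

variable {E : Type*} [NormedAddCommGroup E] [InnerProductSpace ℝ E] [FiniteDimensional ℝ E]
  [MeasurableSpace E] [BorelSpace E] (μ : Measure E) [μ.IsAddHaarMeasure]

/-- Test the Laplacian against the radial potential `∫ s in 0..1 - ‖y‖ ^ 2, k s`, whose gradient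
at `y` is `-2 * k (1 - ‖y‖ ^ 2) • y`. -/
lemma integral_radial_mul_fderiv_self_nonneg {k : ℝ → ℝ} (hk : Continuous k) (hk0 : ∀ t, 0 ≤ k t)
    (hk_neg : ∀ t ≤ 0, k t = 0) {f : E → ℝ} (hf : ContDiff ℝ 2 f) (hΔ : ∀ y, 0 ≤ Δ f y) :
    0 ≤ ∫ y, k (1 - ‖y‖ ^ 2) * fderiv ℝ f y y ∂μ := by
  have deriv_primitive (t : ℝ) := (hk.integral_hasStrictDerivAt 0 t).hasDerivAt
  have smooth_primitive : ContDiff ℝ 1 fun t => ∫ s in (0 : ℝ)..t, k s :=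
    contDiff_one_iff_deriv.mpr ⟨fun t => (deriv_primitive t).differentiableAt,
      by rwa [funext fun t => (deriv_primitive t).deriv]⟩
  let P : E → ℝ := fun y => ∫ s in (0 : ℝ)..1 - ‖y‖ ^ 2, k s
  have smooth : ContDiff ℝ 1 P :=
    smooth_primitive.comp (contDiff_const.sub (contDiff_norm_sq ℝ))
  have vanishes {y : E} (hy : 1 - ‖y‖ ^ 2 ≤ 0) : P y = 0 :=
    intervalIntegral.integral_zero_ae (ae_of_all _ fun s hs =>
      hk_neg s (Set.uIoc_of_ge hy ▸ hs).2)
  have compact : HasCompactSupport P := by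
    refine HasCompactSupport.intro (isCompact_closedBall 0 1) fun y hy => vanishes ?_
    have : 1 < ‖y‖ := by simpa using hy
    nlinarith
  have nonneg (y : E) : 0 ≤ P y := by
    rcases le_total 0 (1 - ‖y‖ ^ 2) with h | h
    · exact intervalIntegral.integral_nonneg h fun s _ => hk0 s
    · exact (vanishes h).ge
  have gradient_eq (y : E) : ∇ P y = (-2 * k (1 - ‖y‖ ^ 2)) • y := by
    have := (deriv_primitive (1 - ‖y‖ ^ 2)).comp_hasFDerivAt y
      ((hasStrictFDerivAt_norm_sq y).hasFDerivAt.const_sub 1)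
    refine HasGradientAt.gradient (hasGradientAt_iff_hasFDerivAt.mpr (this.congr_fderiv ?_))
    ext v
    simp
    ring
  have green := integral_inner_gradient_eq_neg_integral_laplacian_mul (μ := μ) hf smooth
    (.inr compact)
  simp only [gradient_eq, inner_smul_right, inner_gradient_left, mul_assoc, integral_const_mul]
    at green
  have : 0 ≤ ∫ y, Δ f y * P y ∂μ := integral_nonneg fun y => mul_nonneg (hΔ y) (nonneg y)
  linarith

lemma setIntegral_ball_fderiv_self_nonneg {f : E → ℝ} (hf : ContDiff ℝ 2 f) (hΔ : ∀ y, 0 ≤ Δ f y) :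
    0 ≤ ∫ y in Metric.ball 0 1, fderiv ℝ f y y ∂μ := by
  have cont : Continuous fun y => fderiv ℝ f y y :=
    (hf.continuous_fderiv two_ne_zero).clm_apply continuous_id
  let k : ℕ → ℝ → ℝ := fun n t => smoothTransition (n * t)
  have cont_k (n : ℕ) : Continuous (k n) := smoothTransition.continuous.comp (by fun_prop)
  have k_neg (n : ℕ) {t : ℝ} (ht : t ≤ 0) : k n t = 0 :=
    smoothTransition.zero_of_nonpos (mul_nonpos_of_nonneg_of_nonpos n.cast_nonneg ht)
  have approx (n : ℕ) :
      0 ≤ ∫ y in Metric.ball (0 : E) 1, k n (1 - ‖y‖ ^ 2) * fderiv ℝ f y y ∂μ := by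
    rw [setIntegral_eq_integral_of_forall_compl_eq_zero]
    · exact integral_radial_mul_fderiv_self_nonneg μ (cont_k n) (fun t => smoothTransition.nonneg _)
        (fun t => k_neg n) hf hΔ
    · intro y hy
      have : 1 ≤ ‖y‖ := by simpa using hy
      rw [k_neg n (by nlinarith), zero_mul]
  refine ge_of_tendsto' (tendsto_integral_of_dominated_convergence (fun y => ‖fderiv ℝ f y y‖)
    (fun n => ?_) ?_ (fun n => ae_of_all _ fun y => ?_) ?_) approx
  · exact (((cont_k n).comp (by fun_prop)).mul cont).aestronglyMeasurable
  · exact (cont.norm.continuousOn.integrableOn_compact (isCompact_closedBall 0 1)).mono_set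
      Metric.ball_subset_closedBall
  · rw [norm_mul, Real.norm_of_nonneg (smoothTransition.nonneg _)]
    exact mul_le_of_le_one_left (norm_nonneg _) (smoothTransition.le_one _)
  · filter_upwards [ae_restrict_mem measurableSet_ball] with y hy
    have inside : 0 < 1 - ‖y‖ ^ 2 := by
      have : ‖y‖ < 1 := by simpa using hy
      nlinarith [norm_nonneg y]
    refine tendsto_const_nhds.congr' ?_
    filter_upwards [(tendsto_natCast_atTop_atTop.atTop_mul_const inside).eventually_ge_atTop 1]
      with n hn
    rw [show k n (1 - ‖y‖ ^ 2) = 1 from smoothTransition.one_of_one_le hn, one_mul]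

lemma monotoneOn_setIntegral_ball_comp_add_smul {w : E → ℝ} (hw : ContDiff ℝ 2 w)
    (hΔ : ∀ y, 0 ≤ Δ w y) (x : E) :
    MonotoneOn (fun t : ℝ => ∫ y in Metric.ball 0 1, w (x + t • y) ∂μ) (Set.Ici 0) := by
  have fderiv_comp (t : ℝ) (y v : E) :
      fderiv ℝ (fun y => w (x + t • y)) y v = t * fderiv ℝ w (x + t • y) v := by
    have := (hw.differentiable two_ne_zero (x + t • y)).hasFDerivAt.comp y
      (((hasFDerivAt_id y).const_smul t).const_add x)
    exact (DFunLike.congr_fun this.fderiv v).trans (by simp)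
  have deriv_integral := hasDerivAt_setIntegral_of_isCompact (μ := μ)
    (f := fun t y => w (x + t • y)) (f' := fun t y => fderiv ℝ w (x + t • y) y)
    (isCompact_closedBall (0 : E) 1) measurableSet_ball Metric.ball_subset_closedBall
    (fun t => hw.continuous.comp (by fun_prop))
    (((hw.continuous_fderiv two_ne_zero).comp (by fun_prop)).clm_apply continuous_snd)
    (fun t y => by
      have outer := (hw.differentiable two_ne_zero (x + t • y)).hasFDerivAt
      simpa [Function.comp_def] using! outer.comp_hasDerivAt t
        (((hasDerivAt_id t).smul_const y).const_add x))
  refine monotoneOn_of_deriv_nonneg (convex_Ici 0)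
    (fun t _ => (deriv_integral t).continuousAt.continuousWithinAt)
    (fun t _ => (deriv_integral t).differentiableAt.differentiableWithinAt) fun t ht => ?_
  rw [(deriv_integral t).deriv]
  have ht : 0 < t := by simpa using ht
  have rescaled : 0 ≤ ∫ y in Metric.ball 0 1, fderiv ℝ (fun y => w (x + t • y)) y y ∂μ :=
    setIntegral_ball_fderiv_self_nonneg μ (hw.comp (by fun_prop)) fun y => by
      rw [laplacian_comp_add_smul hw]
      exact mul_nonneg (sq_nonneg t) (hΔ _)
  simp only [fderiv_comp, integral_const_mul] at rescaled
  exact nonneg_of_mul_nonneg_right rescaled ht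

lemma setAverage_ball_comp_add_smul (w : E → ℝ) (x : E) {r : ℝ} (hr : 0 < r) :
    ⨍ y in Metric.ball 0 1, w (x + r • y) ∂μ = ⨍ y in Metric.ball x r, w y ∂μ := by
  have scaled := Measure.setIntegral_comp_smul_of_pos μ (fun y => w (x + y)) (Metric.ball 0 1) hr
  have translated := (measurePreserving_add_left μ x).setIntegral_preimage_emb
    (measurableEmbedding_addLeft x) w (Metric.ball x r)
  rw [preimage_add_ball, sub_self] at translated
  rw [setAverage_eq, setAverage_eq, scaled, smul_ball hr.ne', smul_zero, mul_one,
    Real.norm_of_nonneg hr.le, translated, smul_smul, Measure.real, Measure.real,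
    μ.addHaar_ball_of_pos x hr, ENNReal.toReal_mul, ENNReal.toReal_ofReal (by positivity),
    mul_inv_rev]

lemma le_setAverage_ball_of_laplacian_nonneg {w : E → ℝ} (hw : ContDiff ℝ 2 w)
    (hΔ : ∀ y, 0 ≤ Δ w y) (x : E) {r : ℝ} (hr : 0 < r) : w x ≤ ⨍ y in Metric.ball x r, w y ∂μ := by
  have mono := monotoneOn_setIntegral_ball_comp_add_smul μ hw hΔ x Set.self_mem_Ici hr.le hr.le
  have center : ⨍ y in Metric.ball 0 1, w (x + (0 : ℝ) • y) ∂μ = w x := by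
    simp only [zero_smul, add_zero]
    exact setAverage_const (Metric.measure_ball_pos μ _ one_pos).ne' measure_ball_lt_top.ne _
  rw [← setAverage_ball_comp_add_smul μ w x hr, ← center, setAverage_eq, setAverage_eq]
  exact smul_le_smul_of_nonneg_left mono (by positivity)

end MeanValue

section LogIntegrability

lemma integrableAtFilter_nhds_of_eventually_continuousAt {X F : Type*} [TopologicalSpace X]
    [MeasurableSpace X] [OpensMeasurableSpace X] {μ : Measure X} [IsLocallyFiniteMeasure μ]
    [NormedAddCommGroup F] [SecondCountableTopologyEither X F] {f : X → F} {x : X}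
    (hf : ∀ᶠ y in 𝓝 x, ContinuousAt f y) : IntegrableAtFilter f (𝓝 x) μ := by
  obtain ⟨U, hU, hUo, hxU⟩ := eventually_nhds_iff.mp hf
  exact (hU x hxU).tendsto.integrableAtFilter
    (ContinuousAt.stronglyMeasurableAtFilter hUo hU x hxU) (μ.finiteAt_nhds x)

lemma integrableAtFilter_nhds_congr_nhdsNE {X F : Type*} [TopologicalSpace X]
    [MeasurableSpace X] [OpensMeasurableSpace X] {μ : Measure X} [NullSingletonClass μ]
    [NormedAddCommGroup F] {f g : X → F} {x : X}
    (hf : IntegrableAtFilter f (𝓝 x) μ) (h : f =ᶠ[𝓝[≠] x] g) : IntegrableAtFilter g (𝓝 x) μ := by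
  obtain ⟨s, hs, hfs⟩ := hf
  obtain ⟨U, hUo, hxU, hU⟩ := mem_nhdsWithin.mp h
  refine ⟨s ∩ U, inter_mem hs (hUo.mem_nhds hxU), (hfs.mono_set Set.inter_subset_left).congr ?_⟩
  refine ae_restrict_of_ae_restrict_of_subset Set.inter_subset_right ?_
  filter_upwards [ae_restrict_mem hUo.measurableSet, ae_restrict_of_ae (μ.ae_ne x)] with y hy hne
  exact hU ⟨hy, hne⟩

lemma integrableAtFilter_log_norm_sub {E : Type*} [NormedAddCommGroup E] [NormedSpace ℝ E]
    [FiniteDimensional ℝ E] [Nontrivial E] [MeasurableSpace E] [BorelSpace E] (μ : Measure E)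
    [μ.IsAddHaarMeasure] (x : E) : IntegrableAtFilter (fun y => Real.log ‖y - x‖) (𝓝 x) μ := by
  have finrank_pos : 1 ≤ Module.finrank ℝ E := Module.finrank_pos
  have at_zero : IntegrableOn (fun y : E => Real.log ‖y‖) (Metric.ball 0 1) μ := by
    refine integrableOn_ball_of_norm_le_rpow (C := 2) (α := 1 / 2) finrank_pos ?_ ?_
      (Real.measurable_log.comp measurable_norm).aestronglyMeasurable
    · have : (1 : ℝ) ≤ Module.finrank ℝ E := by exact_mod_cast finrank_pos
      linarith
    · filter_upwards [ae_restrict_mem measurableSet_ball, ae_restrict_of_ae (μ.ae_ne 0)]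
        with y hy hne
      have pos : 0 < ‖y‖ := norm_pos_iff.mpr hne
      have bound := Real.abs_log_mul_self_rpow_lt ‖y‖ (1 / 2) pos
        (mem_ball_zero_iff.mp hy).le (by simp)
      rw [abs_mul, abs_of_nonneg (by positivity : 0 ≤ ‖y‖ ^ (1 / 2 : ℝ)), one_div_one_div] at bound
      rw [Real.rpow_neg pos.le, ← div_eq_mul_inv, le_div_iff₀ (by positivity)]
      exact bound.le
  have translated := ((measurePreserving_sub_right μ x).integrableOn_comp_preimage
    (measurableEmbedding_subRight x)).mpr at_zero
  exact ⟨_, (continuous_sub_right x).continuousAt.preimage_mem_nhds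
    (by simpa using Metric.ball_mem_nhds (0 : E) one_pos), translated⟩

lemma integrableAtFilter_log_norm_of_meromorphicAt {F : Type*} [NormedAddCommGroup F]
    [NormedSpace ℂ F] [CompleteSpace F] {f : ℂ → F} {z : ℂ} (hf : MeromorphicAt f z) :
    IntegrableAtFilter (fun w => Real.log ‖f w‖) (𝓝 z) := by
  by_cases order : meromorphicOrderAt f z = ⊤
  · refine integrableAtFilter_nhds_congr_nhdsNE (f := 0) integrableAtFilter_zero ?_
    filter_upwards [meromorphicOrderAt_eq_top_iff.mp order] with w hw
    simp [hw]
  obtain ⟨g, hg, hgz, hfg⟩ := (meromorphicOrderAt_ne_top_iff hf).mp order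
  have hg_ne := hg.continuousAt.eventually_ne hgz
  set n := (meromorphicOrderAt f z).untop₀
  have singular := (integrableAtFilter_log_norm_sub volume z).smul (n : ℝ)
  have regular : IntegrableAtFilter (fun w => Real.log ‖g w‖) (𝓝 z) := by
    refine integrableAtFilter_nhds_of_eventually_continuousAt ?_
    filter_upwards [hg.eventually_analyticAt, hg_ne] with w hw hne
    exact hw.continuousAt.norm.log (norm_ne_zero_iff.mpr hne)
  refine integrableAtFilter_nhds_congr_nhdsNE (singular.add regular) ?_
  filter_upwards [hfg, self_mem_nhdsWithin, hg_ne.filter_mono nhdsWithin_le_nhds]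
    with w hw hwz hgw
  have hne : ‖w - z‖ ≠ 0 := norm_ne_zero_iff.mpr (sub_ne_zero.mpr hwz)
  simp [hw, norm_smul, Real.log_mul (zpow_ne_zero n hne) (norm_ne_zero_iff.mpr hgw)]

lemma ae_ne_zero_of_differentiable {F : ℂ → ℂ} (hF : Differentiable ℂ F) (hF0 : ∃ z, F z ≠ 0) :
    ∀ᵐ z : ℂ, F z ≠ 0 := by
  obtain ⟨x, hx⟩ := hF0
  have codiscrete : F ⁻¹' {0}ᶜ ∈ codiscrete ℂ :=
    AnalyticOnNhd.preimage_zero_mem_codiscrete (fun z _ => hF.analyticAt z) hx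
  have := ae_restrict_le_codiscreteWithin (μ := (volume : Measure ℂ)) MeasurableSet.univ codiscrete
  rwa [Measure.restrict_univ] at this

end LogIntegrability

section NormalizedLaplacian

lemma lapHat_eq_laplacian_div_four {f : ℂ → ℝ} {z : ℂ} (hf : ContDiffAt ℝ 2 f z) :
    lapHat f z = Δ f z / 4 := by
  have hf' : DifferentiableAt ℝ (fderiv ℝ f) z :=
    (hf.fderiv_right (m := 1) (by norm_num)).differentiableAt one_ne_zero
  simp [lapHat, fderiv_fderiv_apply_const hf',
    laplacian_eq_sum_fderiv_fderiv Complex.orthonormalBasisOneI]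

lemma contDiff_lapHat {f : ℂ → ℝ} {n : WithTop ℕ∞} (hf : ContDiff ℝ (n + 2) f) :
    ContDiff ℝ n (lapHat f) := by
  have hf' : ContDiff ℝ (n + 1) (fderiv ℝ f) :=
    hf.fderiv_right (by rw [add_assoc, one_add_one_eq_two])
  have hf'' (v : ℂ) : ContDiff ℝ n fun z => fderiv ℝ (fun w => fderiv ℝ f w v) z v :=
    ((hf'.clm_apply contDiff_const).fderiv_right le_rfl).clm_apply contDiff_const
  exact ((hf'' 1).add (hf'' I)).div_const 4

lemma hasCompactSupport_lapHat {f : ℂ → ℝ} (hf : HasCompactSupport f) :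
    HasCompactSupport (lapHat f) := by
  have hf'' (v : ℂ) : HasCompactSupport fun z => fderiv ℝ (fun w => fderiv ℝ f w v) z v :=
    (hf.fderiv_apply ℝ v).fderiv_apply ℝ v
  exact ((hf'' 1).add (hf'' I)).comp_left (g := (· / 4)) (zero_div 4)

end NormalizedLaplacian

section DistributionalSubharmonicity

variable {u v g : ℂ → ℝ}

lemma integrable_mul_lapHat {ψ : ℂ → ℝ} (hu : LocallyIntegrable u) (hψ : ContDiff ℝ 2 ψ)
    (hc : HasCompactSupport ψ) : Integrable fun z => u z * lapHat ψ z :=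
  hu.integrable_smul_right_of_hasCompactSupport
    (contDiff_lapHat (n := 0) (by simpa using hψ)).continuous (hasCompactSupport_lapHat hc)

lemma SubharmonicDistrib.add (hu : SubharmonicDistrib u) (hv : SubharmonicDistrib v) :
    SubharmonicDistrib (u + v) := by
  refine ⟨hu.1.add hv.1, fun ψ hψ hc hψ0 => ?_⟩
  have hψ2 := contDiff_infty.mp hψ 2
  simp only [Pi.add_apply, add_mul]
  rw [integral_add (integrable_mul_lapHat hu.1 hψ2 hc) (integrable_mul_lapHat hv.1 hψ2 hc)]
  exact add_nonneg (hu.2 ψ hψ hc hψ0) (hv.2 ψ hψ hc hψ0)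

lemma SubharmonicDistrib.congr_ae (hu : SubharmonicDistrib u) (h : u =ᵐ[volume] v) :
    SubharmonicDistrib v := by
  refine ⟨hu.1.congr h, fun ψ hψ hc hψ0 => (hu.2 ψ hψ hc hψ0).trans_eq (integral_congr_ae ?_)⟩
  filter_upwards [h] with z hz
  rw [hz]

lemma subharmonicDistrib_of_laplacian_nonneg (hu : ContDiff ℝ 2 u) (hΔ : ∀ z, 0 ≤ Δ u z) :
    SubharmonicDistrib u := by
  refine ⟨hu.continuous.locallyIntegrable, fun ψ hψ hc hψ0 => ?_⟩
  have hψ2 : ContDiff ℝ 2 ψ := contDiff_infty.mp hψ 2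
  simp only [lapHat_eq_laplacian_div_four hψ2.contDiffAt, ← mul_div_assoc]
  rw [integral_div, integral_mul_laplacian_eq_integral_laplacian_mul hu hψ2 (.inr hc)]
  exact div_nonneg (integral_nonneg fun z => mul_nonneg (hΔ z) (hψ0 z)) (by norm_num)

lemma subharmonicDistrib_of_tendsto_of_dominated {w : ℕ → ℂ → ℝ}
    (hw : ∀ n, SubharmonicDistrib (w n)) (hg : LocallyIntegrable g)
    (bound : ∀ n, ∀ᵐ z, ‖w n z‖ ≤ g z)
    (lim : ∀ᵐ z, Tendsto (fun n => w n z) atTop (𝓝 (u z))) : SubharmonicDistrib u := by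
  have meas (n) : AEStronglyMeasurable (w n) := (hw n).1.aestronglyMeasurable
  have bound_lim : ∀ᵐ z, ‖u z‖ ≤ ‖g z‖ := by
    filter_upwards [ae_all_iff.mpr bound, lim] with z hz hlim
    exact (le_of_tendsto' hlim.norm hz).trans (le_abs_self _)
  refine ⟨hg.mono (aestronglyMeasurable_of_tendsto_ae atTop meas lim) bound_lim,
    fun ψ hψ hc hψ0 => ?_⟩
  have hψ2 := contDiff_infty.mp hψ 2
  have integral_lim : Tendsto (fun n => ∫ z, w n z * lapHat ψ z) atTop
      (𝓝 (∫ z, u z * lapHat ψ z)) := by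
    refine tendsto_integral_of_dominated_convergence (fun z => ‖g z * lapHat ψ z‖)
      (fun n => (integrable_mul_lapHat (hw n).1 hψ2 hc).aestronglyMeasurable)
      (integrable_mul_lapHat hg hψ2 hc).norm (fun n => ?_) ?_
    · filter_upwards [bound n] with z hz
      rw [norm_mul, norm_mul]
      gcongr
      exact hz.trans (le_abs_self _)
    · filter_upwards [lim] with z hz
      exact hz.mul_const _
  exact ge_of_tendsto' integral_lim fun n => (hw n).2 ψ hψ hc hψ0

lemma abs_log_add_le {a c : ℝ} (ha : 0 < a) (hc : 0 ≤ c) (hc1 : c ≤ 1) :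
    |Real.log (a + c)| ≤ 2 * Real.log (a + 1) - Real.log a := by
  have lower : Real.log a ≤ Real.log (a + c) := Real.log_le_log ha (by linarith)
  have upper : Real.log (a + c) ≤ Real.log (a + 1) := Real.log_le_log (by linarith) (by linarith)
  have nonneg : 0 ≤ Real.log (a + 1) := Real.log_nonneg (by linarith)
  exact abs_le.mpr ⟨by linarith, by linarith⟩

lemma subharmonicDistrib_log_norm_sq {F : ℂ → ℂ} (hF : Differentiable ℂ F)
    (hF0 : ∃ z, F z ≠ 0) : SubharmonicDistrib fun z => Real.log (‖F z‖ ^ 2) := by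
  have smooth {c : ℝ} (hc : 0 < c) : ContDiff ℝ 2 fun z => Real.log (‖F z‖ ^ 2 + c) :=
    (contDiff_log_norm_sq_add_const hc (n := 2)).comp (hF.contDiff.restrict_scalars ℝ)
  have log_locInt : LocallyIntegrable fun z => Real.log (‖F z‖ ^ 2) := by
    simp only [Real.log_pow]
    exact LocallyIntegrable.smul (f := fun z => Real.log ‖F z‖) (fun z =>
      integrableAtFilter_log_norm_of_meromorphicAt (hF.analyticAt z).meromorphicAt) (2 : ℝ)
  refine subharmonicDistrib_of_tendsto_of_dominated
    (w := fun n z => Real.log (‖F z‖ ^ 2 + 1 / ((n : ℝ) + 1)))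
    (g := fun z => 2 * Real.log (‖F z‖ ^ 2 + 1) - Real.log (‖F z‖ ^ 2)) (fun n => ?_)
    (((smooth one_pos).continuous.const_mul 2).locallyIntegrable.sub log_locInt) (fun n => ?_) ?_
  · exact subharmonicDistrib_of_laplacian_nonneg (smooth Nat.one_div_pos_of_nat) fun z =>
      laplacian_log_norm_sq_analytic_add_const_nonneg (hF.analyticAt z) Nat.one_div_pos_of_nat
  · filter_upwards [ae_ne_zero_of_differentiable hF hF0] with z hz
    exact abs_log_add_le (by positivity) (by positivity)
      (div_le_one_of_le₀ (by simp) (by positivity))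
  · filter_upwards [ae_ne_zero_of_differentiable hF hF0] with z hz
    have hne : ‖F z‖ ^ 2 ≠ 0 := by positivity
    refine (Real.continuousAt_log hne).tendsto.comp ?_
    simpa only [add_zero] using
      (tendsto_one_div_add_atTop_nhds_zero_nat (𝕜 := ℝ)).const_add (‖F z‖ ^ 2)

end DistributionalSubharmonicity

lemma subharmonicSMV_of_laplacian_nonneg {u : ℂ → ℝ} (hu : ContDiff ℝ 2 u)
    (hΔ : ∀ z, 0 ≤ Δ u z) : SubharmonicSMV u := by
  refine ⟨hu.continuous.upperSemicontinuous, fun z r hr => ?_⟩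
  have volume_ball : volume.real (Metric.ball z r) = Real.pi * r ^ 2 := by
    simp [Measure.real, Complex.volume_ball, hr.le, mul_comm]
  simpa [setAverage_eq, volume_ball] using
    le_setAverage_ball_of_laplacian_nonneg volume hu hΔ z hr

lemma laplacian_two_mul_add_log_lapHat_nonneg {φ : ℂ → ℝ} {z : ℂ} (hφ : ContDiffAt ℝ 2 φ z)
    (hlog : ContDiffAt ℝ 2 (fun w => Real.log (lapHat φ w)) z) (hpos : 0 < lapHat φ z)
    (hcurv : -2 ≤ (lapHat φ z)⁻¹ * lapHat (fun w => Real.log (lapHat φ w)) z) :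
    0 ≤ Δ (fun w => 2 * φ w + Real.log (lapHat φ w)) z := by
  change 0 ≤ Δ ((2 : ℝ) • φ + fun w => Real.log (lapHat φ w)) z
  have h2φ : ContDiffAt ℝ 2 ((2 : ℝ) • φ) z := hφ.const_smul (2 : ℝ)
  rw [h2φ.laplacian_add hlog, laplacian_smul _ hφ, smul_eq_mul]
  rw [inv_mul_eq_div, le_div_iff₀ hpos, lapHat_eq_laplacian_div_four hφ,
    lapHat_eq_laplacian_div_four hlog] at hcurv
  linarith

end

theorem stmt4 (φ : ℂ → ℝ) (hφ : ContDiff ℝ 4 φ) (hpos : ∀ z, 0 < lapHat φ z)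
    (hcurv : ∀ z, -2 ≤ (lapHat φ z)⁻¹ * lapHat (fun w => Real.log (lapHat φ w)) z)
    (F : ℂ → ℂ) (hF : Differentiable ℂ F) (hF0 : ∃ z, F z ≠ 0) :
    SubharmonicDistrib (fun z => Real.log (‖F z‖ ^ 2 * Real.exp (2 * φ z) * lapHat φ z)) ∧
      SubharmonicSMV (fun z => ‖F z‖ ^ 2 * Real.exp (2 * φ z) * lapHat φ z) := by
  have hφ2 : ContDiff ℝ 2 φ := hφ.of_le (by norm_num)
  have hlap : ContDiff ℝ 2 (lapHat φ) := contDiff_lapHat (hφ.of_le (by norm_num))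
  have hlog : ContDiff ℝ 2 fun w => Real.log (lapHat φ w) := hlap.log fun z => (hpos z).ne'
  have smooth : ContDiff ℝ 2 fun z => 2 * φ z + Real.log (lapHat φ z) :=
    (contDiff_const.mul hφ2).add hlog
  have subharmonic (z : ℂ) :=
    laplacian_two_mul_add_log_lapHat_nonneg hφ2.contDiffAt hlog.contDiffAt (hpos z) (hcurv z)
  constructor
  · refine ((subharmonicDistrib_log_norm_sq hF hF0).add
      (subharmonicDistrib_of_laplacian_nonneg smooth subharmonic)).congr_ae ?_
    filter_upwards [ae_ne_zero_of_differentiable hF hF0] with z hz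
    have hne : ‖F z‖ ^ 2 ≠ 0 := by positivity
    rw [Real.log_mul (by positivity) (hpos z).ne', Real.log_mul hne (Real.exp_ne_zero _),
      Real.log_exp, add_assoc, Pi.add_apply]
  · have exp_log (z : ℂ) : ‖F z‖ ^ 2 * Real.exp (2 * φ z) * lapHat φ z =
        ‖F z‖ ^ 2 * Real.exp (2 * φ z + Real.log (lapHat φ z)) := by
      rw [Real.exp_add, Real.exp_log (hpos z), mul_assoc]
    simp only [exp_log]
    exact subharmonicSMV_of_laplacian_nonneg
      (((hF.contDiff.restrict_scalars ℝ).norm_sq ℝ).mul smooth.exp) fun z =>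
        laplacian_norm_sq_analytic_mul_exp_nonneg (hF.analyticAt z) smooth.contDiffAt
          (subharmonic z)
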